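/- arXiv:2403.01568 — 10 statements merged into one kernel-verified Lean document; each statement's English description precedes it below -/
import Mathlib

section
/- For every subset C of V, if C is a BPCC configuration (an independent set of G with total weight w(C) ≤ k), then X(C) = {r} ∪ {r_i : C ∩ V_i ≠ ∅} ∪ {ℓ_v : v ∈ C} is a CT configuration of the reduced instance, i.e., X(C) is closed under precedence in H and Σ_{u ∈ X(C)} s(u) ≤ K = 3k. -/
/-!
Vertices in different parts are adjacent, so an independent set `C` meets at most one part and
`X(C)` contains at most one vertex `r_i`. Its total size is therefore at most
`2k + w(C) ≤ 3k`. Closure under precedence is immediate: the root is always present, and the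
parent `r_(P v)` of a leaf `ℓ_v` with `v ∈ C` is included because `v` witnesses `C ∩ V_(P v) ≠ ∅`.
-/

open Finset

/-- Vertices of the reduced CT instance: the root `none`, the vertices `r_i`
(`some (Sum.inl i)`), and the leaves `ℓ_v` (`some (Sum.inr v)`). -/
abbrev CTVert (V : Type*) (m : ℕ) := Option (Fin m ⊕ V)

/-- Sizes in the reduced CT instance: `s(r) = 0`, `s(r_i) = 2k`, `s(ℓ_v) = w v`. -/
def ctSize {V : Type*} {m : ℕ} (w : V → ℕ) (k : ℕ) : CTVert V m → ℕ
  | none => 0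
  | some (Sum.inl _) => 2 * k
  | some (Sum.inr v) => w v

/-- Edges of the reduced out-tree `H`: `(r, r_i)` for each `i`, and
`(r_i, ℓ_v)` whenever `v` lies in part `V_i` (i.e. `P v = i`). -/
def ctEdge {V : Type*} {m : ℕ} (P : V → Fin m) : CTVert V m → CTVert V m → Prop :=
  fun z u =>
    (z = none ∧ ∃ i : Fin m, u = some (Sum.inl i)) ∨
    (∃ v : V, z = some (Sum.inl (P v)) ∧ u = some (Sum.inr v))

/-- `X(C) = {r} ∪ {r_i : C ∩ V_i ≠ ∅} ∪ {ℓ_v : v ∈ C}`. -/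
def ctX {V : Type*} [DecidableEq V] {m : ℕ} (P : V → Fin m) (C : Finset V) :
    Finset (CTVert V m) :=
  {none} ∪ ((C.image P).image fun i => some (Sum.inl i)) ∪
    (C.image fun v => some (Sum.inr v))

/-- if `C` is a BPCC configuration, then `X(C)` is a CT configuration
of the reduced instance: closed under precedence in `H` and of total size at most `3k`. -/
theorem stmt_0 {V : Type*} [Fintype V] [DecidableEq V] {m : ℕ}
    (P : V → Fin m) (hP : Function.Surjective P)
    (Adj : V → V → Prop) (hAdj : ∀ u v : V, Adj u v ↔ P u ≠ P v)
    (w : V → ℕ) (k : ℕ) (C : Finset V)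
    (hIndep : ∀ u ∈ C, ∀ v ∈ C, ¬ Adj u v)
    (hw : ∑ v ∈ C, w v ≤ k) :
    (∀ u ∈ ctX P C, ∀ z : CTVert V m, ctEdge P z u → z ∈ ctX P C) ∧
    ∑ u ∈ ctX P C, ctSize w k u ≤ 3 * k := by
  have mem_inl : ∀ i, (some (Sum.inl i) : CTVert V m) ∈ ctX P C ↔ ∃ v ∈ C, P v = i := by
    intro i; simp [ctX]
  have mem_inr : ∀ v, (some (Sum.inr v) : CTVert V m) ∈ ctX P C ↔ v ∈ C := by
    intro v; simp [ctX]
  -- Independence forces all of `C` into one part, so at most one `r_i` is used.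
  have hcard : (C.image P).card ≤ 1 := by
    rw [Finset.card_le_one]
    intro a ha b hb
    obtain ⟨u, hu, rfl⟩ := Finset.mem_image.1 ha
    obtain ⟨v, hv, rfl⟩ := Finset.mem_image.1 hb
    by_contra hne
    exact hIndep u hu v hv ((hAdj u v).2 hne)
  refine ⟨?_, ?_⟩
  · rintro u hu z (⟨rfl, -⟩ | ⟨v, rfl, rfl⟩)
    · simp [ctX]
    · exact (mem_inl _).2 ⟨v, (mem_inr v).1 hu, rfl⟩
  · have hsum : ∑ u ∈ ctX P C, ctSize w k u
        = (C.image P).card * (2 * k) + ∑ v ∈ C, w v := by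
      unfold ctX
      rw [Finset.sum_union, Finset.sum_union, Finset.sum_image (s := C.image P),
        Finset.sum_image (s := C) (g := fun v => (some (Sum.inr v) : CTVert V m))]
      · simp [ctSize]
      · intro a _ b _ h; simpa using h
      · intro a _ b _ h; simpa using h
      · simp
      · rw [Finset.disjoint_left]
        simp
    rw [hsum]
    have := Nat.mul_le_mul_right (2 * k) hcard
    omega
end

section
/- Assume k ≥ 1. For every set C of vertices of H, if C is a CT configuration of the reduced instance (closed under precedence in H with total size at most K = 3k), then I(C) = {v ∈ V : ℓ_v ∈ C} is a BPCC configuration, i.e., I(C) is an independent set of G with w(I(C)) ≤ k. -/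
/-!
By closure, every leaf `ℓ_v` in `C` brings its parent `r_{P v}`, of size `2k`, into `C`.
Two leaves from different parts would give two such parents, of total size `4k > 3k`; so the
leaves of `C` lie in one part, which is independent. If `C` contains a leaf at all, its parent
leaves at most `3k - 2k = k` for the leaves.
-/

open Finset

/-- `I(C) = {v ∈ V : ℓ_v ∈ C}`. -/
def ctI {V : Type*} [Fintype V] [DecidableEq V] {m : ℕ} (C : Finset (CTVert V m)) :
    Finset V :=
  univ.filter fun v => (some (Sum.inr v) : CTVert V m) ∈ C

/-- assume `k ≥ 1`.  If `C` is a CT configuration of the reduced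
instance (closed under precedence in `H` with total size at most `K = 3k`), then
`I(C)` is a BPCC configuration: an independent set of `G` with `w(I(C)) ≤ k`. -/
theorem stmt_1 {V : Type*} [Fintype V] [DecidableEq V] {m : ℕ}
    (P : V → Fin m) (hP : Function.Surjective P)
    (Adj : V → V → Prop) (hAdj : ∀ u v : V, Adj u v ↔ P u ≠ P v)
    (w : V → ℕ) (k : ℕ) (hk : 1 ≤ k)
    (C : Finset (CTVert V m))
    (hclosed : ∀ u ∈ C, ∀ z : CTVert V m, ctEdge P z u → z ∈ C)
    (hsize : ∑ u ∈ C, ctSize w k u ≤ 3 * k) :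
    (∀ u ∈ ctI C, ∀ v ∈ ctI C, ¬ Adj u v) ∧ ∑ v ∈ ctI C, w v ≤ k := by
  have mem_ctI : ∀ v, v ∈ ctI C ↔ (some (Sum.inr v) : CTVert V m) ∈ C := by simp [ctI]
  have hpar : ∀ v ∈ ctI C, (some (Sum.inl (P v)) : CTVert V m) ∈ C := fun v hv =>
    hclosed _ ((mem_ctI v).1 hv) _ (Or.inr ⟨v, rfl, rfl⟩)
  constructor
  · intro u hu v hv huv
    rw [hAdj] at huv
    -- `r_{P u}` and `r_{P v}` are distinct and together have size `4k > 3k`.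
    have hsub : ({some (Sum.inl (P u)), some (Sum.inl (P v))} : Finset (CTVert V m)) ⊆ C := by
      simp [insert_subset_iff, hpar u hu, hpar v hv]
    have hle := (sum_le_sum_of_subset (f := ctSize w k) hsub).trans hsize
    rw [sum_pair (by simpa using huv)] at hle
    simp only [ctSize] at hle
    omega
  · rcases (ctI C).eq_empty_or_nonempty with h0 | ⟨v, hv⟩
    · simp [h0]
    -- `r_{P v}` takes up `2k` of the capacity, next to all the leaves of `C`.
    have hinj : Function.Injective fun x : V => (some (Sum.inr x) : CTVert V m) :=
      (Option.some_injective _).comp Sum.inr_injective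
    have hsub : insert (some (Sum.inl (P v))) ((ctI C).map ⟨_, hinj⟩) ⊆ C := by
      refine insert_subset (hpar v hv) fun x hx => ?_
      obtain ⟨y, hy, rfl⟩ := mem_map.1 hx
      exact (mem_ctI y).1 hy
    have hle := (sum_le_sum_of_subset (f := ctSize w k) hsub).trans hsize
    rw [sum_insert (by simp), sum_map] at hle
    simp only [ctSize, Function.Embedding.coeFn_mk] at hle
    omega
end

section
/- Let S ⊆ V_H with |S| ≤ k and w(E_H^S) = q. Then the set T = E_H^S ∪ {v^i : v ∈ S, i ∈ [m+1]} is a feasible solution of the reduced RCP instance R(H) — that is, |T| ≤ c = k·(m+1)+m and T is closed under precedence in G(H) — and its profit satisfies p(T) ≥ q. -/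
/-!
The set `T` has at most `m` edge-vertices and at most `k * (m + 1)` vertex copies, which gives
the cardinality bound. Only edge-vertices have predecessors, and those of a hyperedge `e ⊆ S` are
copies of elements of `S`, so `T` is closed. The profit of `T` is at least that of its
edge-vertices, which is the weight of the hyperedges contained in `S`.
-/

open Finset

/-- Vertices of the reduced RCP graph `G(H)`: `Sum.inl (v, i)` is the `i`-th copy
`v^i` of a hypergraph vertex `v` (with `i ∈ [m+1]`), and `Sum.inr e` is the
edge-vertex corresponding to the hyperedge `e ∈ E_H`. -/
abbrev RCPVert (α : Type*) (EH : Finset (Finset α)) (m : ℕ) :=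
  α × Fin (m + 1) ⊕ {e // e ∈ EH}

/-- Edges of `G(H)`: `(v^i, e)` for every hyperedge `e ∈ E_H`, every `v ∈ e`,
and every copy index `i`. -/
def rcpEdge {α : Type*} (EH : Finset (Finset α)) (m : ℕ) :
    RCPVert α EH m → RCPVert α EH m → Prop :=
  fun z t => ∃ (v : α) (i : Fin (m + 1)) (e : {e // e ∈ EH}),
    v ∈ e.val ∧ z = Sum.inl (v, i) ∧ t = Sum.inr e

/-- Profits in `R(H)`: copies of vertices have profit `0`, and an edge-vertex `e`
has profit `w e`. -/
def rcpProfit {α : Type*} (EH : Finset (Finset α)) (m : ℕ) (w : Finset α → ℕ) :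
    RCPVert α EH m → ℕ
  | Sum.inl _ => 0
  | Sum.inr e => w e.val

/-- `S(T) = {v ∈ V_H : v^i ∈ T for all i ∈ [m+1]}`. -/
def rcpS {α : Type*} [Fintype α] [DecidableEq α] (EH : Finset (Finset α)) (m : ℕ)
    (T : Finset (RCPVert α EH m)) : Finset α :=
  univ.filter fun v => ∀ i : Fin (m + 1), (Sum.inl (v, i) : RCPVert α EH m) ∈ T

/-- for `S ⊆ V_H` with `|S| ≤ k` and `w(E_H^S) = q`, the set
`T = E_H^S ∪ {v^i : v ∈ S, i ∈ [m+1]}` is a feasible solution of `R(H)`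
(`|T| ≤ c = k·(m+1)+m` and `T` is closed under precedence) of profit `≥ q`. -/
theorem stmt_3 {α : Type*} [Fintype α] [DecidableEq α]
    (EH : Finset (Finset α)) (w : Finset α → ℕ) (k m : ℕ) (hm : EH.card = m)
    (S : Finset α) (hS : S.card ≤ k) (q : ℕ)
    (hq : ∑ e ∈ EH.filter (fun e => e ⊆ S), w e = q) :
    let T : Finset (RCPVert α EH m) :=
      ((EH.attach.filter fun e => e.val ⊆ S).image
        fun e => (Sum.inr e : RCPVert α EH m)) ∪
      ((S ×ˢ (univ : Finset (Fin (m + 1)))).image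
        fun p => (Sum.inl p : RCPVert α EH m))
    T.card ≤ k * (m + 1) + m ∧
    (∀ t ∈ T, ∀ z : RCPVert α EH m, rcpEdge EH m z t → z ∈ T) ∧
    q ≤ ∑ t ∈ T, rcpProfit EH m w t := by
  intro T
  refine ⟨?_, ?_, ?_⟩
  · have hE : (EH.attach.filter fun e => e.val ⊆ S).card ≤ m :=
      (card_filter_le _ _).trans (by rw [card_attach, hm])
    have hU : (S ×ˢ (univ : Finset (Fin (m + 1)))).card ≤ k * (m + 1) := by
      rw [card_product, card_univ, Fintype.card_fin]
      exact Nat.mul_le_mul_right _ hS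
    calc T.card ≤ _ + _ := card_union_le _ _
      _ ≤ m + k * (m + 1) :=
        Nat.add_le_add (card_image_le.trans hE) (card_image_le.trans hU)
      _ = k * (m + 1) + m := Nat.add_comm _ _
  · rintro t ht z ⟨v, i, e, hv, rfl, rfl⟩
    have he : e.val ⊆ S := by simpa [T] using ht
    simpa [T] using he hv
  · -- The edge-vertices of `T` alone already contribute exactly `q`.
    calc q = ∑ e ∈ EH.attach.filter (fun e => e.val ⊆ S), w e.val := by
          rw [← hq, sum_filter, sum_filter, ← sum_attach]
      _ = ∑ t ∈ (EH.attach.filter fun e => e.val ⊆ S).image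
            (fun e => (Sum.inr e : RCPVert α EH m)), rcpProfit EH m w t := by
          rw [sum_image (fun _ _ _ _ h => Sum.inr_injective h)]
          rfl
      _ ≤ ∑ t ∈ T, rcpProfit EH m w t := sum_le_sum_of_subset subset_union_left
end

section
/- For every feasible solution T ⊆ V of the reduced RCP instance R(H) (i.e., T closed under precedence in G(H) with |T| ≤ c = k·(m+1)+m), it holds that |S(T)| ≤ k. -/
open Finset

/-- every feasible solution `T` of `R(H)` (closed under precedence
with `|T| ≤ c = k·(m+1)+m`) satisfies `|S(T)| ≤ k`. -/
theorem stmt_5 {α : Type*} [Fintype α] [DecidableEq α]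
    (EH : Finset (Finset α)) (k m : ℕ) (hm : EH.card = m)
    (T : Finset (RCPVert α EH m))
    (hclosed : ∀ t ∈ T, ∀ z : RCPVert α EH m, rcpEdge EH m z t → z ∈ T)
    (hcard : T.card ≤ k * (m + 1) + m) :
    (rcpS EH m T).card ≤ k := by
  -- The `m + 1` copies of each vertex of `S(T)` all lie in `T`, so `|S(T)| * (m + 1) ≤ |T|`.
  have h : (rcpS EH m T).card * (m + 1) ≤ T.card := by
    have hsub : ((rcpS EH m T ×ˢ (univ : Finset (Fin (m + 1)))).map
        (Function.Embedding.inl : _ ↪ RCPVert α EH m)) ⊆ T := by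
      intro x hx
      simp only [mem_map, mem_product, rcpS, mem_filter] at hx
      obtain ⟨⟨v, i⟩, ⟨⟨_, hv⟩, _⟩, rfl⟩ := hx
      exact hv i
    simpa using card_le_card hsub
  -- If `|S(T)| ≥ k + 1`, then `|T| ≥ (k + 1) * (m + 1)`, one more than the bound allows.
  by_contra! hk
  have := Nat.mul_le_mul_right (m + 1) (Nat.succ_le_of_lt hk)
  rw [Nat.succ_mul] at this
  omega
end

section
/- If T ⊆ V is a feasible solution of the reduced RCP instance R(H) with profit p(T) = q, then S(T) is a feasible solution of the DkSH instance on H, i.e., |S(T)| ≤ k, and the total weight of the hyperedges induced by S(T) satisfies w(E_H^{S(T)}) ≥ q. -/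
/-!
Each vertex of `S(T)` contributes all of its `m + 1` copies to `T`, so
`|S(T)| * (m + 1) ≤ |T| ≤ k * (m + 1) + m`, which forces `|S(T)| ≤ k`. Only edge-vertices carry
profit, and by closedness under precedence every edge-vertex `e ∈ T` has all copies of its
vertices in `T`, i.e. `e ⊆ S(T)`; hence the profit of `T` is at most the weight induced by `S(T)`.
-/

open Finset

/-- if `T` is a feasible solution of `R(H)` with profit `q`, then
`S(T)` is a feasible DkSH solution (`|S(T)| ≤ k`) with `w(E_H^{S(T)}) ≥ q`. -/
theorem stmt_7 {α : Type*} [Fintype α] [DecidableEq α]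
    (EH : Finset (Finset α)) (w : Finset α → ℕ) (k m : ℕ) (hm : EH.card = m)
    (T : Finset (RCPVert α EH m))
    (hclosed : ∀ t ∈ T, ∀ z : RCPVert α EH m, rcpEdge EH m z t → z ∈ T)
    (hcard : T.card ≤ k * (m + 1) + m)
    (q : ℕ) (hq : ∑ t ∈ T, rcpProfit EH m w t = q) :
    (rcpS EH m T).card ≤ k ∧
    q ≤ ∑ e ∈ EH.filter (fun e => e ⊆ rcpS EH m T), w e := by
  constructor
  · -- All `m + 1` copies of each vertex of `S(T)` lie in `T`.
    have hsub : ((rcpS EH m T) ×ˢ (univ : Finset (Fin (m + 1)))).map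
        Function.Embedding.inl ⊆ T := by
      intro x hx
      obtain ⟨⟨v, i⟩, hv, rfl⟩ := Finset.mem_map.mp hx
      have hvS := (Finset.mem_product.mp hv).1
      exact (Finset.mem_filter.mp hvS).2 i
    have hle := Finset.card_le_card hsub
    rw [Finset.card_map, Finset.card_product, Finset.card_univ, Fintype.card_fin] at hle
    -- `|S(T)| * (m + 1) ≤ k * (m + 1) + m < (k + 1) * (m + 1)`.
    by_contra! hk
    have hmul : (k + 1) * (m + 1) ≤ (rcpS EH m T).card * (m + 1) :=
      Nat.mul_le_mul_right _ hk
    rw [Nat.add_mul] at hmul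
    omega
  · have hsum : ∑ t ∈ T, rcpProfit EH m w t = ∑ e ∈ T.toRight, w e.val := by
      conv_lhs => rw [← Finset.toLeft_disjSum_toRight (u := T)]
      rw [Finset.sum_disjSum]
      simp [rcpProfit]
    rw [← hq, hsum]
    refine (Finset.sum_map T.toRight (Function.Embedding.subtype _) w).symm.trans_le ?_
    refine Finset.sum_le_sum_of_subset fun x hx => ?_
    obtain ⟨e, he, rfl⟩ := Finset.mem_map.mp hx
    refine Finset.mem_filter.mpr ⟨e.2, fun v hv => Finset.mem_filter.mpr ⟨mem_univ v, fun i => ?_⟩⟩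
    exact hclosed _ (Finset.mem_toRight.mp he) _ ⟨v, i, e, hv, rfl, rfl⟩
end

section
/- Let S ⊆ V be a feasible RCP solution of (G, p, k), i.e., S is closed under precedence and |S| ≤ k, with profit Σ_{v∈S} p(v) = W. Then S is a minimal solution of the reduced DkSH instance H_I of weight W; in particular, for every v ∈ S it holds that P(v) ⊆ S, and Σ_{v ∈ V : P(v) ⊆ S} p(v) = W. -/
/-!
A set closed under direct precedence is closed under directed paths (induction on the path), so
`P(v) ⊆ S` for every `v ∈ S`. Conversely `P(v) ⊆ S` forces `v ∈ S` since `v ∈ P(v)`. Hence the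
hyperedges inside `S` are exactly the `P(v)` with `v ∈ S`; they cover `S` and have total weight `W`.
-/

open Finset

/-- `P(v)`: the set of predecessors of `v`, i.e. vertices `u` from which there is
a directed path (possibly of length 0) to `v` in the graph with edge relation
`Edge`. -/
def preds {V : Type*} [Fintype V] (Edge : V → V → Prop)
    [DecidableRel (Relation.ReflTransGen Edge)] (v : V) : Finset V :=
  univ.filter fun u => Relation.ReflTransGen Edge u v

/-- a feasible RCP solution `S` of `(G,p,k)` (closed under
precedence, `|S| ≤ k`, profit `W`) is a minimal solution of the reduced DkSH
instance `H_I` of weight `W`; in particular `P(v) ⊆ S` for every `v ∈ S`, and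
`Σ_{v : P(v) ⊆ S} p(v) = W`. -/
theorem stmt_9 {V : Type*} [Fintype V] [DecidableEq V]
    (Edge : V → V → Prop) [DecidableRel (Relation.ReflTransGen Edge)]
    (p : V → ℕ) (k : ℕ) (S : Finset V)
    (hclosed : ∀ u ∈ S, ∀ z : V, Edge z u → z ∈ S)
    (hcard : S.card ≤ k)
    (W : ℕ) (hW : ∑ v ∈ S, p v = W) :
    (∀ v ∈ S, ∃ x : V, preds Edge x ⊆ S ∧ v ∈ preds Edge x) ∧
    (∀ v ∈ S, preds Edge v ⊆ S) ∧
    ∑ v ∈ univ.filter (fun v => preds Edge v ⊆ S), p v = W := by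
  have hsub : ∀ v ∈ S, preds Edge v ⊆ S := by
    intro v hv u hu
    have huv : Relation.ReflTransGen Edge u v := by simpa [preds] using hu
    -- Closedness propagates backwards along the path, from its endpoint `v` to its start `u`.
    induction huv using Relation.ReflTransGen.head_induction_on with
    | refl => exact hv
    | head hac hcb ih => exact hclosed _ (ih (by simpa [preds] using hcb)) _ hac
  have hself : ∀ v, v ∈ preds Edge v := fun v => by
    simp [preds, Relation.ReflTransGen.refl]
  refine ⟨fun v hv => ⟨v, hsub v hv, hself v⟩, hsub, ?_⟩
  -- The hyperedges contained in `S` are exactly those indexed by `S`, because `v ∈ P(v)`.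
  have hfilter : univ.filter (fun v => preds Edge v ⊆ S) = S := by
    ext v
    simp only [mem_filter, mem_univ, true_and]
    exact ⟨fun h => h (hself v), hsub v⟩
  rw [hfilter, hW]
end

section
/- Let T ⊆ V be a minimal solution of the reduced DkSH instance H_I of weight W (so |T| ≤ k, every v ∈ T lies in some P(x) with P(x) ⊆ T, and Σ_{v ∈ V : P(v) ⊆ T} p(v) = W). Then T is closed under precedence in G; in particular, P(v) ⊆ T for every v ∈ T, and the RCP profit satisfies Σ_{v∈T} p(v) = W. -/
/-!
Reachability is a preorder. By transitivity, `v ∈ P(x) ⊆ T` forces `P(v) ⊆ T`, so a union of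
hyperedges is closed under precedence. By reflexivity, `P(v) ⊆ T` forces `v ∈ T`. Hence
`{v | P(v) ⊆ T} = T`, and the hypergraph weight and the profit of `T` are the same sum.
-/

open Finset

/-- a minimal solution `T` of the reduced DkSH instance `H_I` of
weight `W` (`|T| ≤ k`, every `v ∈ T` lies in some `P(x) ⊆ T`, and
`Σ_{v : P(v) ⊆ T} p(v) = W`) is closed under precedence in `G`; in particular
`P(v) ⊆ T` for every `v ∈ T`, and its RCP profit is `Σ_{v ∈ T} p(v) = W`. -/
theorem stmt_10 {V : Type*} [Fintype V] [DecidableEq V]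
    (Edge : V → V → Prop) [DecidableRel (Relation.ReflTransGen Edge)]
    (p : V → ℕ) (k : ℕ) (T : Finset V)
    (hcard : T.card ≤ k)
    (hmin : ∀ v ∈ T, ∃ x : V, preds Edge x ⊆ T ∧ v ∈ preds Edge x)
    (W : ℕ) (hW : ∑ v ∈ univ.filter (fun v => preds Edge v ⊆ T), p v = W) :
    (∀ u ∈ T, ∀ z : V, Edge z u → z ∈ T) ∧
    (∀ v ∈ T, preds Edge v ⊆ T) ∧
    ∑ v ∈ T, p v = W := by
  -- If `v ∈ P(x) ⊆ T`, transitivity of reachability gives `P(v) ⊆ P(x) ⊆ T`.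
  have hpreds : ∀ v ∈ T, preds Edge v ⊆ T := by
    intro v hv u hu
    obtain ⟨x, hxT, hvx⟩ := hmin v hv
    simp only [preds, mem_filter, mem_univ, true_and] at hu hvx
    exact hxT (by simpa [preds] using hu.trans hvx)
  refine ⟨fun u hu z hz => hpreds u hu ?_, hpreds, ?_⟩
  · simpa [preds] using Relation.ReflTransGen.single hz
  -- Since `v ∈ P(v)`, the hyperedges inside `T` are exactly the `P(v)` with `v ∈ T`.
  · have hT : univ.filter (fun v => preds Edge v ⊆ T) = T := by
      ext v
      simp only [mem_filter, mem_univ, true_and]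
      exact ⟨fun h => h (by simp [preds, Relation.ReflTransGen.refl]), hpreds v⟩
    rw [← hW, hT]
end

section
/- Let K ∈ ℕ, m ≥ 1, and let b_1, …, b_m ∈ ℕ satisfy b_j + b_{j+1} ≥ K+1 for every 1 ≤ j ≤ m−1. Then m ≤ 2·⌊(b_1 + ⋯ + b_m)/(K+1)⌋ + 1, where ⌊·⌋ denotes the floor of the quotient (natural-number division). -/
open Finset

/-- let `K ∈ ℕ`, `m ≥ 1`, and `b 0, …, b (m-1) ∈ ℕ` (the sizes
`b_1, …, b_m`, indexed from `0`) satisfy `b j + b (j+1) ≥ K + 1` for every pair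
of consecutive indices.  Then `m ≤ 2 · ⌊(b 0 + ⋯ + b (m-1)) / (K+1)⌋ + 1`,
where `/` is natural-number (floor) division. -/
theorem stmt_11 (K m : ℕ) (hm : 1 ≤ m) (b : ℕ → ℕ)
    (hb : ∀ j : ℕ, j + 2 ≤ m → K + 1 ≤ b j + b (j + 1)) :
    m ≤ 2 * ((∑ j ∈ Finset.range m, b j) / (K + 1)) + 1 := by
  -- The `m / 2` disjoint pairs `(b 0, b 1), (b 2, b 3), …` each contribute at least `K + 1`.
  have key : ∀ n : ℕ, 2 * n ≤ m → n * (K + 1) ≤ ∑ j ∈ Finset.range (2 * n), b j := by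
    intro n
    induction n with
    | zero => simp
    | succ n ih =>
      intro h
      have h1 := ih (by omega)
      have h2 := hb (2 * n) (by omega)
      rw [show 2 * (n + 1) = 2 * n + 1 + 1 by ring, Finset.sum_range_succ,
        Finset.sum_range_succ, Nat.succ_mul]
      omega
  have hsum : m / 2 * (K + 1) ≤ ∑ j ∈ Finset.range m, b j :=
    (key (m / 2) (by omega)).trans
      (Finset.sum_le_sum_of_subset (Finset.range_subset_range.2 (by omega)))
  have hdiv := (Nat.le_div_iff_mul_le (Nat.succ_pos K)).2 hsum
  simp only [Nat.succ_eq_add_one] at hdiv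
  omega
end

section
/- Let k ∈ ℕ and suppose F ⊆ V satisfies |F| ≤ k and |{e ∈ E : e ⊆ F}| = m with m ≥ 1, and P ⊆ V \ F satisfies |P| = k − |F|. Then Q = {v_i : v ∈ F ∪ P, i ∈ [2m]} ∪ {e ∈ E : e ⊆ F} is closed under precedence in D_m(G) and |Q| = 2mk + m. -/
/-!
Every edge of `D_m(G)` starts at a copy `v_i`. If it ends at another copy of `v`, membership in
`Q` does not depend on the index; if it ends at an edge-vertex `e ∈ Q`, then `v ∈ e ⊆ F`, so all
copies of `v` lie in `Q`. For the cardinality, `Q` is the disjoint union of the `2m` copies of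
each of the `|F| + (k - |F|) = k` vertices of `F ∪ P` and the `m` edges induced by `F`.
-/

open Finset

/-- Vertices of the `m`-reduced graph `D_m(G)`: `Sum.inl (v, i)` is the copy
`v_i` of a vertex `v` of `G` (with `i ∈ [2m]`), and `Sum.inr e` is the
edge-vertex corresponding to the edge `e ∈ E`. -/
abbrev DmVert (V : Type*) (E : Finset (Finset V)) (m : ℕ) :=
  V × Fin (2 * m) ⊕ {e // e ∈ E}

/-- Edges of `D_m(G)`: `(v_i, v_j)` for every `v ∈ V` and `i, j ∈ [2m]`, and
`(v_i, e)` for every `e ∈ E`, `v ∈ e`, and `i ∈ [2m]`. -/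
def dmEdge {V : Type*} (E : Finset (Finset V)) (m : ℕ) :
    DmVert V E m → DmVert V E m → Prop :=
  fun z u =>
    (∃ (v : V) (i j : Fin (2 * m)), z = Sum.inl (v, i) ∧ u = Sum.inl (v, j)) ∨
    (∃ (v : V) (i : Fin (2 * m)) (e : {e // e ∈ E}),
        v ∈ e.val ∧ z = Sum.inl (v, i) ∧ u = Sum.inr e)

/-- `S(T) = {v ∈ V : v_i ∈ T for all i ∈ [2m]}`. -/
def dmS {V : Type*} [Fintype V] [DecidableEq V] (E : Finset (Finset V)) (m : ℕ)
    (T : Finset (DmVert V E m)) : Finset V :=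
  univ.filter fun v => ∀ i : Fin (2 * m), (Sum.inl (v, i) : DmVert V E m) ∈ T

/-- suppose `F ⊆ V` has `|F| ≤ k` and induces exactly `m ≥ 1`
edges, and `P ⊆ V \ F` has `|P| = k − |F|`.  Then
`Q = {v_i : v ∈ F ∪ P, i ∈ [2m]} ∪ {e ∈ E : e ⊆ F}` is closed under precedence
in `D_m(G)` and `|Q| = 2mk + m`. -/
theorem stmt_16 {V : Type*} [Fintype V] [DecidableEq V]
    (E : Finset (Finset V)) (hE : ∀ e ∈ E, e.card = 2)
    (k m : ℕ) (hm : 1 ≤ m)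
    (F Pp : Finset V)
    (hF : F.card ≤ k)
    (hFm : (E.filter fun e => e ⊆ F).card = m)
    (hPF : Disjoint Pp F) (hPcard : Pp.card = k - F.card) :
    let Q : Finset (DmVert V E m) :=
      (((F ∪ Pp) ×ˢ (univ : Finset (Fin (2 * m)))).image
        fun p => (Sum.inl p : DmVert V E m)) ∪
      ((E.attach.filter fun e => e.val ⊆ F).image
        fun e => (Sum.inr e : DmVert V E m))
    (∀ u ∈ Q, ∀ z : DmVert V E m, dmEdge E m z u → z ∈ Q) ∧
    Q.card = 2 * m * k + m := by
  intro Q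
  constructor
  · rintro u hu z (⟨v, i, j, rfl, rfl⟩ | ⟨v, i, e, hve, rfl, rfl⟩)
    · simpa [Q] using hu
    · have he : e.val ⊆ F := by simpa [Q] using hu
      simp [Q, he hve]
  · have hedges : (E.attach.filter fun e => e.val ⊆ F).card = m := by
      rw [← hFm, ← card_map (Function.Embedding.subtype _)]
      congr 1
      ext e
      simp [and_comm]
    have hverts : (F ∪ Pp).card = k := by
      rw [card_union_of_disjoint hPF.symm]
      omega
    rw [card_union_of_disjoint, card_image_of_injective _ Sum.inl_injective,
      card_image_of_injective _ Sum.inr_injective, card_product, hverts, hedges,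
      card_univ, Fintype.card_fin, mul_comm k]
    -- the side goal left by `card_union_of_disjoint`
    simp [disjoint_left]
end

section
/- Let k ∈ ℕ and m ∈ ℕ with m ≥ 1. There exists F ⊆ V with |F| ≤ k such that at least m edges of G have both endpoints in F, if and only if there exists a set T of vertices of D_m(G) that is closed under precedence with |T| ≤ 2km + m and |T ∩ E| ≥ m. -/
/-!
A set `F` inducing at least `m` edges corresponds to the closed set made of all `2m` copies of
each vertex of `F` together with exactly `m` of the induced edges, which has `2m|F| + m` elements.
Conversely, for closed `T` take `F = S(T)`: closure puts every edge of `T` inside `S(T)`, and `T`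
contains the `2m|S(T)|` copies of vertices of `S(T)` besides its at least `m` edges, so
`2m|S(T)| + m ≤ 2km + m` and hence `|S(T)| ≤ k`.
-/

open Finset

/-- there exists `F ⊆ V` with `|F| ≤ k` inducing at least `m`
edges of `G` iff there exists a set `T` of vertices of `D_m(G)`, closed under
precedence, with `|T| ≤ 2km + m` and `|T ∩ E| ≥ m`. -/
theorem stmt_17 {V : Type*} [Fintype V] [DecidableEq V]
    (E : Finset (Finset V)) (hE : ∀ e ∈ E, e.card = 2)
    (k m : ℕ) (hm : 1 ≤ m) :
    (∃ F : Finset V, F.card ≤ k ∧ m ≤ (E.filter fun e => e ⊆ F).card) ↔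
    (∃ T : Finset (DmVert V E m),
        (∀ u ∈ T, ∀ z : DmVert V E m, dmEdge E m z u → z ∈ T) ∧
        T.card ≤ 2 * k * m + m ∧
        m ≤ (E.attach.filter fun e => (Sum.inr e : DmVert V E m) ∈ T).card) := by
  constructor
  · rintro ⟨F, hF, hcard⟩
    -- Only `m` of the induced edges are kept, so that the size bound on `T` holds.
    obtain ⟨A, hA, hAm⟩ := Finset.exists_subset_card_eq hcard
    have hAE : ∀ e ∈ A, e ∈ E ∧ e ⊆ F := fun e he => by simpa using hA he
    have hcA : (E.attach.filter fun e => e.val ∈ A).card = m := by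
      rw [← hAm, ← Finset.card_map (Function.Embedding.subtype _)]
      congr 1
      ext e
      simp only [Finset.mem_map, Finset.mem_filter, Finset.mem_attach, true_and,
        Function.Embedding.coe_subtype, Subtype.exists]
      constructor
      · rintro ⟨a, _, ha, rfl⟩
        exact ha
      · intro he
        exact ⟨e, (hAE e he).1, he, rfl⟩
    refine ⟨(F ×ˢ (univ : Finset (Fin (2 * m)))).disjSum
      (E.attach.filter fun e => e.val ∈ A), ?_, ?_, ?_⟩
    · rintro u hu z (⟨v, i, j, rfl, rfl⟩ | ⟨v, i, e, hv, rfl, rfl⟩)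
      · simpa using hu
      · have he : e.val ∈ A := by simpa using hu
        simpa using (hAE _ he).2 hv
    · rw [Finset.card_disjSum, hcA, Finset.card_product, Finset.card_univ, Fintype.card_fin]
      nlinarith [Nat.mul_le_mul_right (2 * m) hF]
    · simp only [Finset.inr_mem_disjSum, Finset.mem_filter, Finset.mem_attach, true_and]
      exact hcA.ge
  · rintro ⟨T, hT, hcard, hm'⟩
    refine ⟨dmS E m T, ?_, hm'.trans ?_⟩
    · have hsub : (dmS E m T ×ˢ (univ : Finset (Fin (2 * m)))).disjSum
          (E.attach.filter fun e => (Sum.inr e : DmVert V E m) ∈ T) ⊆ T := by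
        rintro (⟨v, i⟩ | e) hx
        · have hv : ∀ i : Fin (2 * m), (Sum.inl (v, i) : DmVert V E m) ∈ T := by
            simpa [dmS] using hx
          exact hv i
        · simpa using hx
      have hle := Finset.card_le_card hsub
      rw [Finset.card_disjSum, Finset.card_product, Finset.card_univ, Fintype.card_fin] at hle
      have hmul : (dmS E m T).card * (2 * m) ≤ k * (2 * m) := by
        have : 2 * k * m = k * (2 * m) := by ring
        omega
      exact Nat.le_of_mul_le_mul_right hmul (by omega)
    · refine Finset.card_le_card_of_injOn Subtype.val ?_ Subtype.val_injective.injOn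
      intro e he
      have heT : (Sum.inr e : DmVert V E m) ∈ T := by simpa using he
      simp only [Finset.coe_filter, Set.mem_setOf_eq]
      refine ⟨e.2, fun v hv => ?_⟩
      simp only [dmS, Finset.mem_filter, Finset.mem_univ, true_and]
      exact fun i => hT _ heT _ (Or.inr ⟨v, i, e, hv, rfl, rfl⟩)
end
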